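/- Expression of S as a function of V alone at fixed β₁, and concavity: (a) for every (φ, β₁) ∈ D with V = V(φ, β₁) ≠ 4/3, one has ((3φ − β₁)/(1 − β₁))·(V − 1) + 1/2 = 1/2 + 3(V − 1)·(V − 2 + √(V(V−1)))/(3V − 4). (b) The function h defined on (1, ∞) by h(v) = 1/2 + 3(v − 1)·(v − 2 + √(v(v−1)))/(3v − 4) for v ≠ 4/3, and extended by continuity at v = 4/3 (the limit exists there), is strictly concave on (1, ∞). -/

import Mathlib

/-- `U(φ, β₁) = 9(1−φ)β₃/(Y β₂)` where `β₂ = 3(1−φ) − 2β₁`, `β₃ = β₁ − 2 + 3φ`,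
`Y = 3φ − β₁`. -/
noncomputable def Ufun (φ β₁ : ℝ) : ℝ :=
  9 * (1 - φ) * (β₁ - 2 + 3 * φ) / ((3 * φ - β₁) * (3 * (1 - φ) - 2 * β₁))

/-- `V(φ, β₁) = 1 + β₂²/(3 Y β₃)`. -/
noncomputable def Vfun (φ β₁ : ℝ) : ℝ :=
  1 + (3 * (1 - φ) - 2 * β₁) ^ 2 / (3 * (3 * φ - β₁) * (β₁ - 2 + 3 * φ))

/-- The constraint polygon `D` for the pair `(φ, β₁)`. -/
def Dset : Set (ℝ × ℝ) :=
  {q | 0.525245 ≤ q.1 ∧ q.1 ≤ 0.619063 ∧ 0.33018 ≤ q.2 ∧ q.2 ≤ 0.52891 ∧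
    0.33018 ≤ 3 * (1 - q.1) - 2 * q.2 ∧ 3 * (1 - q.1) - 2 * q.2 ≤ 0.52891 ∧
    0.077639 ≤ q.2 - 2 + 3 * q.1 ∧ q.2 - 2 + 3 * q.1 ≤ 0.21782}

/-!
With `β₂ = 3(1 − φ) − 2β₁` and `β₃ = β₁ − 2 + 3φ` one has `Y = 2β₂ + 3β₃` and `1 − β₁ = β₂ + β₃`,
so `V` and `S` depend only on `t = 3β₃/β₂`: `V = 1 + 1/(t(t + 2))` and `S = 1/2 + 3/(t(t + 3))`.
Along this curve `V(V − 1)` is the square of `(t + 1)/(t(t + 2))`, so `t` can be eliminated with a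
square root, which gives (a). As `t` runs through `(0, ∞)`, `V` decreases through all of `(1, ∞)`,
and the chord of the curve between the parameters `q` and `t` has slope
`3(q + 2)/(q + 3) · (1 − q/((t + 3)(t + q + 2)))`. This increases with `t`, hence decreases with
`V`, which is strict concavity.
-/

/-- The value of `V` in terms of the ratio `t = 3β₃/β₂`. -/
noncomputable def vOfRatio (t : ℝ) : ℝ :=
  1 + 1 / (t * (t + 2))

/-- The value of `S = (Y/(1 − β₁))(V − 1) + 1/2` in terms of the ratio `t = 3β₃/β₂`. -/
noncomputable def sOfRatio (t : ℝ) : ℝ :=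
  1 / 2 + 3 / (t * (t + 3))

/-- The quantity `S` as a function of `V`, with the numerator of the paper's formula rationalized:
this removes the singularity at `v = 4/3`. -/
noncomputable def sOfV (v : ℝ) : ℝ :=
  1 / 2 + 3 * (v - 1) / (2 - v + √(v * (v - 1)))

lemma sOfV_eq_of_ne {v : ℝ} (hv : 0 ≤ v * (v - 1)) (hne : v ≠ 4 / 3) :
    sOfV v = 1 / 2 + 3 * (v - 1) * (v - 2 + √(v * (v - 1))) / (3 * v - 4) := by
  have conj_mul : (2 - v + √(v * (v - 1))) * (v - 2 + √(v * (v - 1))) = 3 * v - 4 := by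
    linear_combination Real.sq_sqrt hv
  have hnum : v - 2 + √(v * (v - 1)) ≠ 0 := by
    refine right_ne_zero_of_mul (a := 2 - v + √(v * (v - 1))) ?_
    rw [conj_mul]
    exact fun h => hne (by linarith)
  rw [sOfV, ← conj_mul, mul_div_mul_right _ _ hnum]

section Ratio

variable {t : ℝ}

lemma one_lt_vOfRatio (ht : 0 < t) : 1 < vOfRatio t :=
  lt_add_of_pos_right 1 (by positivity)

lemma strictAntiOn_vOfRatio : StrictAntiOn vOfRatio (Set.Ioi 0) := by
  intro p (hp : 0 < p) q _ hpq
  unfold vOfRatio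
  gcongr

lemma exists_vOfRatio_eq {v : ℝ} (hv : 1 < v) : ∃ t, 0 < t ∧ vOfRatio t = v := by
  have hv' : 0 < v - 1 := sub_pos.mpr hv
  have one_lt_sqrt : 1 < √(v / (v - 1)) := by
    rw [Real.lt_sqrt zero_le_one, one_pow, one_lt_div hv']
    linarith
  refine ⟨√(v / (v - 1)) - 1, sub_pos.mpr one_lt_sqrt, ?_⟩
  have hprod : (√(v / (v - 1)) - 1) * (√(v / (v - 1)) - 1 + 2) = 1 / (v - 1) := by
    have hsq : √(v / (v - 1)) ^ 2 = v / (v - 1) := Real.sq_sqrt (by positivity)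
    have hdiv : v / (v - 1) - 1 = 1 / (v - 1) := by
      field_simp
      ring
    linear_combination hsq + hdiv
  rw [vOfRatio, hprod, one_div_one_div, add_sub_cancel]

lemma sqrt_vOfRatio_mul_sub_one (ht : 0 < t) :
    √(vOfRatio t * (vOfRatio t - 1)) = (t + 1) / (t * (t + 2)) := by
  have hsq : vOfRatio t * (vOfRatio t - 1) = ((t + 1) / (t * (t + 2))) ^ 2 := by
    unfold vOfRatio
    field_simp
    ring
  rw [hsq, Real.sqrt_sq (by positivity)]

lemma sOfV_vOfRatio (ht : 0 < t) : sOfV (vOfRatio t) = sOfRatio t := by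
  have hden : 2 - vOfRatio t + (t + 1) / (t * (t + 2)) = (t + 3) / (t + 2) := by
    unfold vOfRatio
    field_simp
    ring
  rw [sOfV, sqrt_vOfRatio_mul_sub_one ht, hden, vOfRatio, sOfRatio]
  field_simp
  ring

end Ratio

lemma slope_sOfV_vOfRatio {q t : ℝ} (hq : 0 < q) (ht : 0 < t) (hqt : q ≠ t) :
    slope sOfV (vOfRatio q) (vOfRatio t) =
      3 * (q + 2) / (q + 3) * (1 - q / ((t + 3) * (t + q + 2))) := by
  have hV : vOfRatio t - vOfRatio q =
      (q - t) * (t + q + 2) / (t * (t + 2) * (q * (q + 2))) := by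
    unfold vOfRatio
    field_simp
    ring
  have hS : sOfRatio t - sOfRatio q =
      3 * (q - t) * (t + q + 3) / (t * (t + 3) * (q * (q + 3))) := by
    unfold sOfRatio
    field_simp
    ring
  have hsub : q - t ≠ 0 := sub_ne_zero.mpr hqt
  rw [slope_def_field, sOfV_vOfRatio hq, sOfV_vOfRatio ht, hV, hS]
  field_simp
  ring

lemma slope_sOfV_lt_slope {p q r : ℝ} (hr : 0 < r) (hrq : r < q) (hqp : q < p) :
    slope sOfV (vOfRatio q) (vOfRatio r) < slope sOfV (vOfRatio q) (vOfRatio p) := by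
  have hq : 0 < q := hr.trans hrq
  have hp : 0 < p := hq.trans hqp
  rw [slope_sOfV_vOfRatio hq hr hrq.ne', slope_sOfV_vOfRatio hq hp hqp.ne]
  have hrp : r < p := hrq.trans hqp
  gcongr

lemma strictConcaveOn_sOfV : StrictConcaveOn ℝ (Set.Ioi 1) sOfV := by
  refine strictConcaveOn_of_slope_strict_anti_adjacent (convex_Ioi 1) ?_
  intro x y z hx hz hxy hyz
  obtain ⟨p, hp, rfl⟩ := exists_vOfRatio_eq hx
  obtain ⟨q, hq, rfl⟩ := exists_vOfRatio_eq (hx.trans hxy)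
  obtain ⟨r, hr, rfl⟩ := exists_vOfRatio_eq hz
  have hqp : q < p := (strictAntiOn_vOfRatio.lt_iff_gt hp hq).mp hxy
  have hrq : r < q := (strictAntiOn_vOfRatio.lt_iff_gt hq hr).mp hyz
  rw [← slope_def_field, ← slope_def_field, slope_comm sOfV (vOfRatio p)]
  exact slope_sOfV_lt_slope hr hrq hqp

lemma continuousOn_sOfV : ContinuousOn sOfV (Set.Ioi 1) :=
  strictConcaveOn_sOfV.concaveOn.continuousOn isOpen_Ioi

section FixedBeta

variable {φ β₁ : ℝ}

lemma Vfun_eq_vOfRatio (hβ₂ : 3 * (1 - φ) - 2 * β₁ ≠ 0) :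
    Vfun φ β₁ = vOfRatio (3 * (β₁ - 2 + 3 * φ) / (3 * (1 - φ) - 2 * β₁)) := by
  have hY : 3 * φ - β₁ = 2 * (3 * (1 - φ) - 2 * β₁) + 3 * (β₁ - 2 + 3 * φ) := by ring
  rw [Vfun, vOfRatio, hY]
  generalize 3 * (1 - φ) - 2 * β₁ = β₂ at *
  generalize β₁ - 2 + 3 * φ = β₃
  congr 1
  field_simp
  ring

lemma S_eq_sOfRatio (hβ₂ : 0 < 3 * (1 - φ) - 2 * β₁) (hβ₃ : 0 < β₁ - 2 + 3 * φ) :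
    (3 * φ - β₁) / (1 - β₁) * (Vfun φ β₁ - 1) + 1 / 2 =
      sOfRatio (3 * (β₁ - 2 + 3 * φ) / (3 * (1 - φ) - 2 * β₁)) := by
  have hY : 3 * φ - β₁ = 2 * (3 * (1 - φ) - 2 * β₁) + 3 * (β₁ - 2 + 3 * φ) := by ring
  have hsum : 1 - β₁ = (3 * (1 - φ) - 2 * β₁) + (β₁ - 2 + 3 * φ) := by ring
  rw [Vfun_eq_vOfRatio hβ₂.ne', vOfRatio, sOfRatio, hY, hsum]
  generalize 3 * (1 - φ) - 2 * β₁ = β₂ at *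
  generalize β₁ - 2 + 3 * φ = β₃ at *
  field_simp
  ring

end FixedBeta

theorem S_as_function_of_V_fixed_beta_and_concavity_general :
    (∀ φ β₁ : ℝ, 0 < 3 * (1 - φ) - 2 * β₁ → 0 < β₁ - 2 + 3 * φ →
        Vfun φ β₁ ≠ 4 / 3 →
        (3 * φ - β₁) / (1 - β₁) * (Vfun φ β₁ - 1) + 1 / 2 =
          1 / 2 + 3 * (Vfun φ β₁ - 1) *
              (Vfun φ β₁ - 2 + √(Vfun φ β₁ * (Vfun φ β₁ - 1))) /
            (3 * Vfun φ β₁ - 4)) ∧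
      ∃ h : ℝ → ℝ,
        (∀ v : ℝ, 1 < v → v ≠ 4 / 3 →
            h v = 1 / 2 + 3 * (v - 1) * (v - 2 + √(v * (v - 1))) / (3 * v - 4)) ∧
          ContinuousAt h (4 / 3) ∧ StrictConcaveOn ℝ (Set.Ioi 1) h := by
  refine ⟨fun φ β₁ hβ₂ hβ₃ hne => ?_, sOfV, fun v hv hne => ?_,
    continuousOn_sOfV.continuousAt (Ioi_mem_nhds (by norm_num)), strictConcaveOn_sOfV⟩
  · have hratio : 0 < 3 * (β₁ - 2 + 3 * φ) / (3 * (1 - φ) - 2 * β₁) := by positivity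
    have hV : 1 < Vfun φ β₁ := Vfun_eq_vOfRatio hβ₂.ne' ▸ one_lt_vOfRatio hratio
    rw [S_eq_sOfRatio hβ₂ hβ₃, ← sOfV_vOfRatio hratio, ← Vfun_eq_vOfRatio hβ₂.ne']
    exact sOfV_eq_of_ne (by nlinarith) hne
  · exact sOfV_eq_of_ne (by nlinarith) hne

/-- (a) for `(φ, β₁) ∈ D` with `V = V(φ, β₁) ≠ 4/3`,
`((3φ − β₁)/(1 − β₁))·(V − 1) + 1/2 = 1/2 + 3(V − 1)(V − 2 + √(V(V−1)))/(3V − 4)`;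
(b) the function `h(v) = 1/2 + 3(v − 1)(v − 2 + √(v(v−1)))/(3v − 4)` for `v ≠ 4/3`,
extended by continuity at `v = 4/3` (the limit exists there), is strictly concave on
`(1, ∞)`. -/
theorem S_as_function_of_V_fixed_beta_and_concavity :
    (∀ φ β₁ : ℝ, (φ, β₁) ∈ Dset → Vfun φ β₁ ≠ 4 / 3 →
        (3 * φ - β₁) / (1 - β₁) * (Vfun φ β₁ - 1) + 1 / 2 =
          1 / 2 + 3 * (Vfun φ β₁ - 1) *
              (Vfun φ β₁ - 2 + Real.sqrt (Vfun φ β₁ * (Vfun φ β₁ - 1))) /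
            (3 * Vfun φ β₁ - 4)) ∧
      ∃ h : ℝ → ℝ,
        (∀ v : ℝ, 1 < v → v ≠ 4 / 3 →
            h v = 1 / 2 + 3 * (v - 1) * (v - 2 + Real.sqrt (v * (v - 1))) / (3 * v - 4)) ∧
          ContinuousAt h (4 / 3) ∧ StrictConcaveOn ℝ (Set.Ioi 1) h := by
  refine ⟨?_, S_as_function_of_V_fixed_beta_and_concavity_general.2⟩
  rintro φ β₁ ⟨-, -, -, -, hβ₂, -, hβ₃, -⟩
  exact S_as_function_of_V_fixed_beta_and_concavity_general.1 φ β₁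
    (lt_of_lt_of_le (by norm_num) hβ₂) (lt_of_lt_of_le (by norm_num) hβ₃)
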